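/- Let M_k(q) = \sum_{j=0}^{2k} (-1)^{j+k} q^{j(2k-j)+k}. Then M_k(q) equals the sum of weights of Dyck paths of length 2k in which each up step from height h has weight 1 or -q^{h+1}, each down step from height h has weight 1 or -q^h, and no two consecutive steps form an up-down pair both weighted 1. -/

import Mathlib

open Finset Polynomial
open scoped Classical

noncomputable section
/-- The value of a step: `+1` for an up step, `-1` for a down step. -/
def stepVal (b : Bool) : ℤ := if b then 1 else -1

/-- Height of the path after its first `i` steps. -/
def pathHeight {m : ℕ} (s : Fin m → Bool) (i : ℕ) : ℤ :=
  ∑ j : Fin m, if (j : ℕ) < i then stepVal (s j) else 0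

/-- A Dyck path: all partial sums nonnegative, final height `0`. -/
def IsDyck {m : ℕ} (s : Fin m → Bool) : Prop :=
  (∀ i : Fin m, 0 ≤ pathHeight s ((i : ℕ) + 1)) ∧ pathHeight s m = 0

/-- No up step weighted `1` immediately followed by a down step weighted `1`
(`w i = true` means the step `i` carries weight `1`). -/
def NoDouble11 {m : ℕ} (s w : Fin m → Bool) : Prop :=
  ∀ i j : Fin m, (j : ℕ) = (i : ℕ) + 1 →
    ¬(s i = true ∧ s j = false ∧ w i = true ∧ w j = true)

/-! Conditioning on the last step, and removing the paths whose last two steps form the forbidden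
pair, gives
`P (m + 2) h = (1 - q ^ h) P (m + 1) (h - 1) + (1 - q ^ (h + 1)) P (m + 1) (h + 1) - P m h`
for the total weight `P m h` of the paths from `0` to `h` with `m` steps. The diagonal values are
`P h h = (q; q)_h`, and these data determine `P`. The solution is
`P (h + 2 u) h = (-1) ^ (h + u) q ^ u ∑ (-1) ^ i ρ i j h`, summed over `i + j = 2 (h + u)`, where
`ρ i j h` is the proportion of matrices of rank `h` among the `i × j` matrices over a field with
`q⁻¹` elements: Pascal-type rules for `ρ` combine into a relation whose alternating sum telescopes
to the recurrence. At `h = 0` only the zero matrix counts, so that `ρ i j 0 = q ^ (i * j)`.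
-/

section QAnalogues

variable {R : Type*} [CommRing R] (q : R)

/-- The Gaussian binomial coefficient with base `q`, defined by the `q`-Pascal rule so that it makes
sense in any commutative ring. -/
def gaussBinom : ℕ → ℕ → R
  | _, 0 => 1
  | 0, _ + 1 => 0
  | n + 1, h + 1 => q ^ (h + 1) * gaussBinom n (h + 1) + gaussBinom n h

lemma gaussBinom_zero_right (n : ℕ) : gaussBinom q n 0 = 1 := by
  cases n <;> rfl

lemma gaussBinom_succ_succ (n h : ℕ) :
    gaussBinom q (n + 1) (h + 1) = q ^ (h + 1) * gaussBinom q n (h + 1) + gaussBinom q n h := rfl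

lemma gaussBinom_eq_zero_of_lt {n h : ℕ} (hn : n < h) : gaussBinom q n h = 0 := by
  induction n generalizing h with
  | zero => cases h with
    | zero => omega
    | succ h => rfl
  | succ n ih => cases h with
    | zero => omega
    | succ h => rw [gaussBinom_succ_succ, ih (by omega), ih (by omega), mul_zero, zero_add]

lemma gaussBinom_self (n : ℕ) : gaussBinom q n n = 1 := by
  induction n with
  | zero => rfl
  | succ n ih =>
    rw [gaussBinom_succ_succ, gaussBinom_eq_zero_of_lt q n.lt_succ_self, ih, mul_zero, zero_add]

lemma one_sub_pow_mul_gaussBinom_succ_right (n h : ℕ) :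
    (1 - q ^ (h + 1)) * gaussBinom q n (h + 1) = (1 - q ^ (n - h)) * gaussBinom q n h := by
  induction n generalizing h with
  | zero => simp [gaussBinom_eq_zero_of_lt]
  | succ n ih =>
    cases h with
    | zero =>
      have h0 := ih 0
      simp only [gaussBinom_succ_succ, gaussBinom_zero_right, Nat.sub_zero] at h0 ⊢
      linear_combination q * h0
    | succ h =>
      rcases le_or_gt n h with hn | hn
      · rw [gaussBinom_eq_zero_of_lt q (show n + 1 < h + 2 by omega),
          show n + 1 - (h + 1) = 0 by omega]
        simp
      · obtain ⟨u, rfl⟩ := Nat.exists_eq_add_of_lt hn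
        have h1 := ih (h + 1)
        have h2 := ih h
        rw [show h + u + 1 - (h + 1) = u by omega] at h1
        rw [show h + u + 1 - h = u + 1 by omega] at h2
        rw [show h + u + 1 + 1 - (h + 1) = u + 1 by omega,
          gaussBinom_succ_succ q (h + u + 1) (h + 1), gaussBinom_succ_succ q (h + u + 1) h]
        linear_combination q ^ (h + 2) * h1 + h2

lemma gaussBinom_succ_succ' (n h : ℕ) :
    gaussBinom q (n + 1) (h + 1) = gaussBinom q n (h + 1) + q ^ (n - h) * gaussBinom q n h := by
  linear_combination
    gaussBinom_succ_succ q n h - one_sub_pow_mul_gaussBinom_succ_right q n h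

lemma one_sub_pow_mul_gaussBinom_succ_succ (n h : ℕ) :
    (1 - q ^ (h + 1)) * gaussBinom q (n + 1) (h + 1) = (1 - q ^ (n + 1)) * gaussBinom q n h := by
  rcases lt_or_ge n h with hn | hn
  · simp [gaussBinom_eq_zero_of_lt q hn, gaussBinom_eq_zero_of_lt q (Nat.succ_lt_succ hn)]
  · have absorb := one_sub_pow_mul_gaussBinom_succ_right q n h
    have hpow : q ^ h * q ^ (n - h) = q ^ n := by rw [← pow_add, Nat.add_sub_cancel' hn]
    rw [gaussBinom_succ_succ]
    linear_combination q ^ (h + 1) * absorb - q * gaussBinom q n h * hpow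

/-- The `q`-Pochhammer symbol `(q; q)_h = (1 - q) (1 - q ^ 2) ⋯ (1 - q ^ h)`. -/
def qPochhammer (h : ℕ) : R := ∏ l ∈ Finset.range h, (1 - q ^ (l + 1))

lemma qPochhammer_succ (h : ℕ) : qPochhammer q (h + 1) = qPochhammer q h * (1 - q ^ (h + 1)) :=
  Finset.prod_range_succ _ _

/-- When `q⁻¹` is the order of a finite field, `rankPoly q i j h` is the proportion of matrices of
rank `h` among the `i × j` matrices over that field. -/
def rankPoly (i j h : ℕ) : R :=
  gaussBinom q i h * gaussBinom q j h * qPochhammer q h * q ^ ((i - h) * (j - h))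

lemma rankPoly_comm (i j h : ℕ) : rankPoly q i j h = rankPoly q j i h := by
  rw [rankPoly, rankPoly, mul_comm (i - h), mul_comm (gaussBinom q i h)]

lemma rankPoly_zero_right (i j : ℕ) : rankPoly q i j 0 = q ^ (i * j) := by
  simp [rankPoly, gaussBinom_zero_right, qPochhammer]

lemma rankPoly_self (h : ℕ) : rankPoly q h h h = qPochhammer q h := by
  simp [rankPoly, gaussBinom_self]

lemma rankPoly_eq_zero_of_lt_left {i h : ℕ} (j : ℕ) (hi : i < h) : rankPoly q i j h = 0 := by
  simp [rankPoly, gaussBinom_eq_zero_of_lt q hi]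

lemma rankPoly_eq_zero_of_lt_right {j h : ℕ} (i : ℕ) (hj : j < h) : rankPoly q i j h = 0 := by
  rw [rankPoly_comm, rankPoly_eq_zero_of_lt_left q i hj]

lemma one_sub_pow_mul_rankPoly_succ_succ_succ (i j h : ℕ) :
    (1 - q ^ (h + 1)) * rankPoly q (i + 1) (j + 1) (h + 1) =
      (1 - q ^ (i + 1)) * (1 - q ^ (j + 1)) * rankPoly q i j h := by
  have absorb_i := one_sub_pow_mul_gaussBinom_succ_succ q i h
  have absorb_j := one_sub_pow_mul_gaussBinom_succ_succ q j h
  simp only [rankPoly, qPochhammer_succ, Nat.add_sub_add_right]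
  linear_combination qPochhammer q h * q ^ ((i - h) * (j - h)) *
    ((1 - q ^ (h + 1)) * gaussBinom q (j + 1) (h + 1) * absorb_i +
      (1 - q ^ (i + 1)) * gaussBinom q i h * absorb_j)

-- A random row lies in a given row space of dimension `h + 1` with probability `q ^ (j - (h + 1))`
-- and outside one of dimension `h` with probability `1 - q ^ (j - h)`; the factor `q ^ (h + 1)`
-- clears the truncated subtractions.
lemma pow_mul_rankPoly_succ_left (i j h : ℕ) :
    q ^ (h + 1) * rankPoly q (i + 1) j (h + 1) =
      q ^ j * rankPoly q i j (h + 1) + (q ^ (h + 1) - q ^ (j + 1)) * rankPoly q i j h := by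
  rcases lt_or_ge i h with hi | hi
  · simp [rankPoly_eq_zero_of_lt_left q j, hi, hi.trans h.lt_succ_self]
  rcases lt_trichotomy j h with hj | rfl | hj
  · simp [rankPoly_eq_zero_of_lt_right q _, hj, hj.trans h.lt_succ_self]
  · simp [rankPoly_eq_zero_of_lt_right q _]
  obtain ⟨u, rfl⟩ := Nat.exists_eq_add_of_le hi
  obtain ⟨v, rfl⟩ := Nat.exists_eq_add_of_lt hj
  have pascal := gaussBinom_succ_succ' q (h + u) h
  have absorb := one_sub_pow_mul_gaussBinom_succ_right q (h + v + 1) h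
  have hexp : q ^ v * q ^ ((u - 1) * v) * gaussBinom q (h + u) (h + 1) =
      q ^ (u * v) * gaussBinom q (h + u) (h + 1) := by
    cases u with
    | zero => simp [gaussBinom_eq_zero_of_lt]
    | succ u => rw [Nat.add_sub_cancel]; ring
  rw [Nat.add_sub_cancel_left] at pascal
  rw [show h + v + 1 - h = v + 1 by omega] at absorb
  simp only [rankPoly, qPochhammer_succ, Nat.add_sub_add_right, Nat.add_sub_cancel_left,
    show h + u - (h + 1) = u - 1 by omega, show h + v + 1 - h = v + 1 by omega]
  linear_combination qPochhammer q h * q ^ (h + 1) *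
    ((1 - q ^ (h + 1)) * gaussBinom q (h + v + 1) (h + 1) * (q ^ (u * v) * pascal - hexp) +
      q ^ (u * v + u) * gaussBinom q (h + u) h * absorb)

lemma pow_mul_rankPoly_succ_succ (i j h : ℕ) :
    q ^ (h + 1) * rankPoly q (i + 1) (j + 1) (h + 1) =
      q ^ (i + j + 1) * rankPoly q i j (h + 1) +
        (q ^ (h + 1) - q ^ (i + j + 2)) * rankPoly q i j h := by
  rcases lt_or_ge i h with hi | hi
  · simp [rankPoly_eq_zero_of_lt_left q _, hi, hi.trans h.lt_succ_self]
  rcases lt_or_ge j h with hj | hj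
  · simp [rankPoly_eq_zero_of_lt_right q _, hj, hj.trans h.lt_succ_self]
  obtain ⟨u, rfl⟩ := Nat.exists_eq_add_of_le hi
  obtain ⟨v, rfl⟩ := Nat.exists_eq_add_of_le hj
  have pascal_u := gaussBinom_succ_succ' q (h + u) h
  have pascal_v := gaussBinom_succ_succ' q (h + v) h
  have absorb_u := one_sub_pow_mul_gaussBinom_succ_right q (h + u) h
  have absorb_v := one_sub_pow_mul_gaussBinom_succ_right q (h + v) h
  have hexp : q ^ (u + v) * q ^ ((u - 1) * (v - 1)) *
        (gaussBinom q (h + u) (h + 1) * gaussBinom q (h + v) (h + 1)) =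
      q ^ (u * v + 1) * (gaussBinom q (h + u) (h + 1) * gaussBinom q (h + v) (h + 1)) := by
    rcases u with _ | u
    · simp [gaussBinom_eq_zero_of_lt]
    rcases v with _ | v
    · simp [gaussBinom_eq_zero_of_lt]
    rw [Nat.add_sub_cancel, Nat.add_sub_cancel]
    ring
  simp only [Nat.add_sub_cancel_left] at pascal_u pascal_v absorb_u absorb_v
  simp only [rankPoly, qPochhammer_succ, Nat.add_sub_add_right, Nat.add_sub_cancel_left,
    show h + u - (h + 1) = u - 1 by omega, show h + v - (h + 1) = v - 1 by omega]
  rw [pascal_u, pascal_v]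
  generalize gaussBinom q (h + u) (h + 1) = α, gaussBinom q (h + u) h = α₀,
    gaussBinom q (h + v) (h + 1) = β, gaussBinom q (h + v) h = β₀ at *
  linear_combination qPochhammer q h * (-q ^ (2 * h + 1) * (1 - q ^ (h + 1)) * hexp +
    q ^ (h + 1) * q ^ (u * v) *
      (((1 - q ^ (h + 1)) * β + q ^ v * β₀) * absorb_u + α₀ * absorb_v))

lemma rankPoly_rec_zero (i j : ℕ) :
    q * rankPoly q (i + 1) (j + 1) 0 =
      (1 - q) * rankPoly q (i + 1) (j + 1) 1 +
        q * (rankPoly q i (j + 1) 0 + rankPoly q (i + 1) j 0) - rankPoly q i j 0 := by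
  have lower := one_sub_pow_mul_rankPoly_succ_succ_succ q i j 0
  simp only [rankPoly_zero_right, zero_add, pow_one] at lower ⊢
  linear_combination -lower

lemma rankPoly_rec_succ (i j h : ℕ) :
    q * rankPoly q (i + 1) (j + 1) (h + 1) =
      (1 - q ^ (h + 2)) * rankPoly q (i + 1) (j + 1) (h + 2) +
        q ^ (h + 2) * (rankPoly q i (j + 1) (h + 1) + rankPoly q (i + 1) j (h + 1)) -
          rankPoly q i j (h + 1) + q * (1 - q ^ (h + 1)) * rankPoly q i j h := by
  have lower := one_sub_pow_mul_rankPoly_succ_succ_succ q i j h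
  have lower_succ := one_sub_pow_mul_rankPoly_succ_succ_succ q i j (h + 1)
  have raise_i := pow_mul_rankPoly_succ_left q i j h
  have raise_j := pow_mul_rankPoly_succ_left q j i h
  rw [rankPoly_comm q (j + 1), rankPoly_comm q j, rankPoly_comm q j] at raise_j
  have raise_both := pow_mul_rankPoly_succ_succ q i j h
  linear_combination q * lower + q * raise_both - lower_succ - q * raise_i - q * raise_j

/-- The alternating sum of `f` over the antidiagonal `i + j = n`. -/
def altSum (f : ℕ → ℕ → R) (n : ℕ) : R :=
  ∑ p ∈ HasAntidiagonal.antidiagonal n, (-1) ^ p.1 * f p.1 p.2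

lemma altSum_telescope (f : ℕ → ℕ → R) (n : ℕ) :
    altSum (fun i j => f i (j + 1) + f (i + 1) j) n = f 0 (n + 1) + (-1) ^ n * f (n + 1) 0 := by
  have split_first := Finset.Nat.sum_antidiagonal_succ (n := n)
    (f := fun p => (-1) ^ p.1 * f p.1 p.2)
  rw [Finset.Nat.sum_antidiagonal_succ'] at split_first
  simp only [pow_succ, pow_zero, mul_neg, mul_one, neg_mul, one_mul, Finset.sum_neg_distrib]
    at split_first
  simp only [altSum, mul_add, Finset.sum_add_distrib]
  linear_combination split_first

lemma altSum_add_two (f : ℕ → ℕ → R) (n : ℕ) :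
    altSum f (n + 2) =
      f 0 (n + 2) + (-1) ^ n * f (n + 2) 0 - altSum (fun i j => f (i + 1) (j + 1)) n := by
  rw [altSum, Finset.Nat.sum_antidiagonal_succ, Finset.Nat.sum_antidiagonal_succ']
  simp only [altSum, pow_succ, pow_zero, mul_neg, mul_one, neg_mul, one_mul,
    Finset.sum_neg_distrib]
  ring

lemma altSum_rankPoly_zero_rec (n : ℕ) :
    q * altSum (rankPoly q · · 0) (n + 2) =
      (1 - q) * altSum (rankPoly q · · 1) (n + 2) + altSum (rankPoly q · · 0) n := by
  have summed : q * altSum (fun i j => rankPoly q (i + 1) (j + 1) 0) n =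
      (1 - q) * altSum (fun i j => rankPoly q (i + 1) (j + 1) 1) n +
        q * altSum (fun i j => rankPoly q i (j + 1) 0 + rankPoly q (i + 1) j 0) n -
          altSum (rankPoly q · · 0) n := by
    simp only [altSum, Finset.mul_sum, ← Finset.sum_add_distrib, ← Finset.sum_sub_distrib]
    exact Finset.sum_congr rfl fun p _ => by
      linear_combination (-1) ^ p.1 * rankPoly_rec_zero q p.1 p.2
  rw [altSum_telescope (rankPoly q · · 0)] at summed
  rw [altSum_add_two, altSum_add_two]
  simp only [rankPoly_zero_right, zero_mul, mul_zero, pow_zero,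
    rankPoly_eq_zero_of_lt_left q _ zero_lt_one,
    rankPoly_eq_zero_of_lt_right q _ zero_lt_one] at summed ⊢
  linear_combination -summed

lemma altSum_rankPoly_succ_rec (n h : ℕ) :
    q * altSum (rankPoly q · · (h + 1)) (n + 2) =
      (1 - q ^ (h + 2)) * altSum (rankPoly q · · (h + 2)) (n + 2) +
        altSum (rankPoly q · · (h + 1)) n -
          q * (1 - q ^ (h + 1)) * altSum (rankPoly q · · h) n := by
  have summed : q * altSum (fun i j => rankPoly q (i + 1) (j + 1) (h + 1)) n =
      (1 - q ^ (h + 2)) * altSum (fun i j => rankPoly q (i + 1) (j + 1) (h + 2)) n +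
        q ^ (h + 2) *
          altSum (fun i j => rankPoly q i (j + 1) (h + 1) + rankPoly q (i + 1) j (h + 1)) n -
          altSum (rankPoly q · · (h + 1)) n +
            q * (1 - q ^ (h + 1)) * altSum (rankPoly q · · h) n := by
    simp only [altSum, Finset.mul_sum, ← Finset.sum_add_distrib, ← Finset.sum_sub_distrib]
    exact Finset.sum_congr rfl fun p _ => by
      linear_combination (-1) ^ p.1 * rankPoly_rec_succ q p.1 p.2 h
  rw [altSum_telescope (rankPoly q · · (h + 1))] at summed
  rw [altSum_add_two, altSum_add_two]
  simp only [rankPoly_eq_zero_of_lt_left q _ (Nat.succ_pos _),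
    rankPoly_eq_zero_of_lt_right q _ (Nat.succ_pos _)] at summed ⊢
  linear_combination -summed

lemma altSum_rankPoly_two_mul_self (h : ℕ) :
    altSum (rankPoly q · · h) (2 * h) = (-1) ^ h * qPochhammer q h := by
  rw [altSum, Finset.sum_eq_single (h, h), rankPoly_self]
  · rintro ⟨i, j⟩ hp hne
    rw [HasAntidiagonal.mem_antidiagonal] at hp
    rcases lt_or_ge i h with hi | hi
    · rw [rankPoly_eq_zero_of_lt_left q j hi, mul_zero]
    · rw [rankPoly_eq_zero_of_lt_right q i (by grind), mul_zero]
  · simp [two_mul]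

/-- The closed form of the total weight of the admissible paths with `h + 2 * u` steps that end at
height `h`. -/
def pathPoly (h u : ℕ) : R :=
  (-1) ^ (h + u) * q ^ u * altSum (rankPoly q · · h) (2 * (h + u))

lemma pathPoly_zero_right (h : ℕ) : pathPoly q h 0 = qPochhammer q h := by
  rw [pathPoly, add_zero, altSum_rankPoly_two_mul_self, pow_zero, mul_one, ← mul_assoc,
    ← mul_pow, neg_one_mul, neg_neg, one_pow, one_mul]

lemma pathPoly_zero_succ (u : ℕ) :
    pathPoly q 0 (u + 1) = (1 - q) * pathPoly q 1 u - pathPoly q 0 u := by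
  have recurrence := altSum_rankPoly_zero_rec q (2 * u)
  simp only [pathPoly, zero_add, add_comm 1 u, mul_add, mul_one]
  linear_combination (-1) ^ (u + 1) * q ^ u * recurrence

lemma pathPoly_succ_succ (h u : ℕ) :
    pathPoly q (h + 1) (u + 1) =
      (1 - q ^ (h + 1)) * pathPoly q h (u + 1) + (1 - q ^ (h + 2)) * pathPoly q (h + 2) u -
        pathPoly q (h + 1) u := by
  have recurrence := altSum_rankPoly_succ_rec q (2 * (h + u + 1)) h
  simp only [pathPoly, show h + 1 + (u + 1) = h + u + 1 + 1 by ring,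
    show h + (u + 1) = h + u + 1 by ring, show h + 2 + u = h + u + 1 + 1 by ring,
    show h + 1 + u = h + u + 1 by ring, mul_add 2 (h + u + 1) 1, mul_one]
  linear_combination (-1) ^ (h + u) * q ^ u * recurrence

lemma pathPoly_zero_left (k : ℕ) :
    pathPoly q 0 k =
      ∑ j ∈ Finset.range (2 * k + 1), (-1) ^ (j + k) * q ^ (j * (2 * k - j) + k) := by
  rw [pathPoly, zero_add, altSum, Finset.Nat.sum_antidiagonal_eq_sum_range_succ_mk, Finset.mul_sum]
  refine Finset.sum_congr rfl fun j _ => ?_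
  rw [rankPoly_zero_right]
  ring

end QAnalogues

section WeightedPaths

/-- The last step is an up step of weight `1`, so that it cannot be followed by a down step of
weight `1`. -/
def EndsUpOne {m : ℕ} (s w : Fin m → Bool) : Prop :=
  ∃ i : Fin m, (i : ℕ) + 1 = m ∧ s i = true ∧ w i = true

/-- The weighted paths from `0` to `h` with `m` steps that stay nonnegative and avoid the forbidden
configuration; as in `NoDouble11`, a path is its step sequence together with the indicator of
the steps of weight `1`. -/
def admissiblePaths (m : ℕ) (h : ℤ) : Finset ((Fin m → Bool) × (Fin m → Bool)) :=
  {p | (∀ i : Fin m, 0 ≤ pathHeight p.1 ((i : ℕ) + 1)) ∧ pathHeight p.1 m = h ∧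
    NoDouble11 p.1 p.2}

lemma mem_admissiblePaths {m : ℕ} {h : ℤ} {p : (Fin m → Bool) × (Fin m → Bool)} :
    p ∈ admissiblePaths m h ↔
      (∀ i : Fin m, 0 ≤ pathHeight p.1 ((i : ℕ) + 1)) ∧ pathHeight p.1 m = h ∧
        NoDouble11 p.1 p.2 := by
  simp [admissiblePaths]

lemma pathHeight_snoc_of_le {m : ℕ} (s : Fin m → Bool) (b : Bool) {i : ℕ} (hi : i ≤ m) :
    pathHeight (Fin.snoc s b : Fin (m + 1) → Bool) i = pathHeight s i := by
  simp [pathHeight, Fin.sum_univ_castSucc, hi]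

lemma pathHeight_snoc_succ {m : ℕ} (s : Fin m → Bool) (b : Bool) :
    pathHeight (Fin.snoc s b : Fin (m + 1) → Bool) (m + 1) = pathHeight s m + stepVal b := by
  simp [pathHeight, Fin.sum_univ_castSucc]

lemma pathHeight_le_length {m : ℕ} (s : Fin m → Bool) (i : ℕ) : pathHeight s i ≤ m := by
  calc pathHeight s i ≤ ∑ _j : Fin m, (1 : ℤ) :=
        Finset.sum_le_sum fun j _ => by unfold stepVal; split_ifs <;> norm_num
    _ = m := by simp

lemma noDouble11_snoc {m : ℕ} (s w : Fin m → Bool) (b d : Bool) :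
    NoDouble11 (Fin.snoc s b : Fin (m + 1) → Bool) (Fin.snoc w d) ↔
      NoDouble11 s w ∧ ¬(EndsUpOne s w ∧ b = false ∧ d = true) := by
  constructor
  · intro H
    refine ⟨fun i j hij => ?_, ?_⟩
    · simpa using H i.castSucc j.castSucc (by simpa using hij)
    · rintro ⟨⟨i, hi, hs, hw⟩, hb, hd⟩
      exact H i.castSucc (Fin.last m) (by simp [hi]) (by simp [hs, hw, hb, hd])
  · rintro ⟨hprefix, hlast⟩ i j hij
    obtain ⟨i, rfl⟩ := Fin.exists_castSucc_eq.mpr (show i ≠ Fin.last m by grind)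
    induction j using Fin.lastCases with
    | last =>
      simp only [Fin.snoc_castSucc, Fin.snoc_last]
      exact fun ⟨hs, hb, hw, hd⟩ => hlast ⟨⟨i, by simpa using hij.symm, hs, hw⟩, hb, hd⟩
    | cast j => simpa using hprefix i j (by simpa using hij)

lemma endsUpOne_snoc {m : ℕ} (s w : Fin m → Bool) (b d : Bool) :
    EndsUpOne (Fin.snoc s b : Fin (m + 1) → Bool) (Fin.snoc w d) ↔ b = true ∧ d = true := by
  constructor
  · rintro ⟨i, hi, hs, hw⟩
    obtain rfl : i = Fin.last m := Fin.ext (by simpa using hi)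
    exact ⟨by simpa using hs, by simpa using hw⟩
  · rintro ⟨rfl, rfl⟩
    exact ⟨Fin.last m, by simp⟩

lemma snoc_mem_admissiblePaths {m : ℕ} (s w : Fin m → Bool) (b d : Bool) {h : ℤ} (hh : 0 ≤ h) :
    (Fin.snoc s b, Fin.snoc w d) ∈ admissiblePaths (m + 1) h ↔
      (s, w) ∈ admissiblePaths m (h - stepVal b) ∧ ¬(EndsUpOne s w ∧ b = false ∧ d = true) := by
  have hprefix (i : Fin m) : pathHeight (Fin.snoc s b : Fin (m + 1) → Bool) ((i : ℕ) + 1) =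
      pathHeight s ((i : ℕ) + 1) := pathHeight_snoc_of_le s b (by omega)
  simp only [mem_admissiblePaths, noDouble11_snoc, Fin.forall_fin_succ', Fin.val_castSucc,
    Fin.val_last, hprefix, pathHeight_snoc_succ, eq_sub_iff_add_eq]
  grind

lemma admissiblePaths_eq_empty_of_neg (m : ℕ) {h : ℤ} (hh : h < 0) : admissiblePaths m h = ∅ := by
  refine Finset.eq_empty_of_forall_notMem fun p hp => ?_
  obtain ⟨hnonneg, rfl, -⟩ := mem_admissiblePaths.mp hp
  cases m with
  | zero => simp [pathHeight] at hh
  | succ m => exact hh.not_ge (by simpa using hnonneg (Fin.last m))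

lemma admissiblePaths_eq_empty_of_lt {m : ℕ} {h : ℤ} (hh : m < h) : admissiblePaths m h = ∅ := by
  refine Finset.eq_empty_of_forall_notMem fun p hp => ?_
  obtain ⟨-, rfl, -⟩ := mem_admissiblePaths.mp hp
  exact hh.not_ge (pathHeight_le_length p.1 m)

lemma sum_fin_succ_arrow {α M : Type*} [Fintype α] [AddCommMonoid M] {m : ℕ}
    (f : (Fin (m + 1) → α) → M) : ∑ s, f s = ∑ s : Fin m → α, ∑ a, f (Fin.snoc s a) := by
  rw [← (Fin.snocEquiv fun _ : Fin (m + 1) => α).sum_comp, Fintype.sum_prod_type_right]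
  rfl

lemma sum_admissiblePaths_succ {M : Type*} [AddCommMonoid M] (m : ℕ) {h : ℤ} (hh : 0 ≤ h)
    (f : (Fin (m + 1) → Bool) × (Fin (m + 1) → Bool) → M) :
    ∑ p ∈ admissiblePaths (m + 1) h, f p =
      ∑ p ∈ admissiblePaths m (h - 1), f (Fin.snoc p.1 true, Fin.snoc p.2 true) +
      ∑ p ∈ admissiblePaths m (h - 1), f (Fin.snoc p.1 true, Fin.snoc p.2 false) +
      (∑ p ∈ admissiblePaths m (h + 1) with ¬EndsUpOne p.1 p.2,
          f (Fin.snoc p.1 false, Fin.snoc p.2 true) +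
        ∑ p ∈ admissiblePaths m (h + 1), f (Fin.snoc p.1 false, Fin.snoc p.2 false)) := by
  simp only [Finset.sum_filter, ← Fintype.sum_ite_mem (admissiblePaths (m + 1) h),
    ← Fintype.sum_ite_mem (admissiblePaths m (h - 1)),
    ← Fintype.sum_ite_mem (admissiblePaths m (h + 1)), Fintype.sum_prod_type, sum_fin_succ_arrow,
    ← Finset.sum_add_distrib]
  refine Finset.sum_congr rfl fun s _ => ?_
  rw [Finset.sum_comm]
  refine Finset.sum_congr rfl fun w _ => ?_
  simp only [Fintype.sum_bool, snoc_mem_admissiblePaths _ _ _ _ hh]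
  simp [stepVal, ite_and]

variable {R : Type*} [CommRing R] (c : Bool → ℤ → R)

/-- The weight of a weighted path, where `c b a` is the weight other than `1` allowed for a step
in direction `b` from height `a`. -/
def pathWeight {m : ℕ} (s w : Fin m → Bool) : R :=
  ∏ i : Fin m, if w i then 1 else c (s i) (pathHeight s i)

/-- The total weight of the admissible paths from `0` to `h` with `m` steps. -/
def pathSum (m : ℕ) (h : ℤ) : R :=
  ∑ p ∈ admissiblePaths m h, pathWeight c p.1 p.2

/-- The part of `pathSum` that comes from the paths whose last step is an up step of weight `1`. -/
def pathSumUpOne (m : ℕ) (h : ℤ) : R :=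
  ∑ p ∈ admissiblePaths m h with EndsUpOne p.1 p.2, pathWeight c p.1 p.2

lemma pathWeight_snoc {m : ℕ} (s w : Fin m → Bool) (b d : Bool) :
    pathWeight c (Fin.snoc s b : Fin (m + 1) → Bool) (Fin.snoc w d) =
      pathWeight c s w * if d then 1 else c b (pathHeight s m) := by
  simp [pathWeight, Fin.prod_univ_castSucc, pathHeight_snoc_of_le, Fin.is_le']

lemma pathSum_of_neg (m : ℕ) {h : ℤ} (hh : h < 0) : pathSum c m h = 0 := by
  rw [pathSum, admissiblePaths_eq_empty_of_neg m hh, Finset.sum_empty]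

lemma pathSum_of_lt {m : ℕ} {h : ℤ} (hh : m < h) : pathSum c m h = 0 := by
  rw [pathSum, admissiblePaths_eq_empty_of_lt hh, Finset.sum_empty]

lemma pathSumUpOne_of_lt {m : ℕ} {h : ℤ} (hh : m < h) : pathSumUpOne c m h = 0 := by
  rw [pathSumUpOne, admissiblePaths_eq_empty_of_lt hh, Finset.filter_empty, Finset.sum_empty]

lemma pathSum_zero_zero : pathSum c 0 0 = 1 := by
  simp [pathSum, admissiblePaths, NoDouble11, pathHeight, pathWeight]

lemma pathSumUpOne_succ (m : ℕ) {h : ℤ} (hh : 0 ≤ h) :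
    pathSumUpOne c (m + 1) h = pathSum c m (h - 1) := by
  rw [pathSumUpOne, Finset.sum_filter, sum_admissiblePaths_succ m hh]
  simp [endsUpOne_snoc, pathWeight_snoc, pathSum]

lemma sum_pathWeight_mul_apply_pathHeight (m : ℕ) (h : ℤ) (f : ℤ → R) :
    ∑ p ∈ admissiblePaths m h, pathWeight c p.1 p.2 * f (pathHeight p.1 m) =
      f h * pathSum c m h := by
  rw [pathSum, Finset.mul_sum]
  refine Finset.sum_congr rfl fun p hp => ?_
  rw [(mem_admissiblePaths.mp hp).2.1, mul_comm]

lemma pathSum_succ (m : ℕ) {h : ℤ} (hh : 0 ≤ h) :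
    pathSum c (m + 1) h =
      (1 + c true (h - 1)) * pathSum c m (h - 1) + (1 + c false (h + 1)) * pathSum c m (h + 1) -
        pathSumUpOne c m (h + 1) := by
  have split_last := Finset.sum_filter_add_sum_filter_not (admissiblePaths m (h + 1))
    (fun p => EndsUpOne p.1 p.2) (fun p => pathWeight c p.1 p.2)
  rw [pathSum, sum_admissiblePaths_succ m hh]
  simp only [pathWeight_snoc, if_true, Bool.false_eq_true, if_false, mul_one,
    sum_pathWeight_mul_apply_pathHeight, pathSum, pathSumUpOne]
  linear_combination split_last

lemma pathSum_add_two (m : ℕ) {h : ℤ} (hh : 0 ≤ h) :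
    pathSum c (m + 2) h =
      (1 + c true (h - 1)) * pathSum c (m + 1) (h - 1) +
        (1 + c false (h + 1)) * pathSum c (m + 1) (h + 1) - pathSum c m h := by
  rw [pathSum_succ c (m + 1) hh, pathSumUpOne_succ c m (by omega), add_sub_cancel_right]

lemma pathSum_succ_self (m : ℕ) :
    pathSum c (m + 1) (m + 1 : ℕ) = (1 + c true m) * pathSum c m m := by
  have hm : (m : ℤ) < (m + 1 : ℕ) + 1 := by omega
  have hprev : ((m + 1 : ℕ) : ℤ) - 1 = m := by omega
  rw [pathSum_succ c m (Int.natCast_nonneg _), pathSum_of_lt c hm, pathSumUpOne_of_lt c hm, hprev,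
    mul_zero, add_zero, sub_zero]

end WeightedPaths

section ClosedForm

variable {R : Type*} [CommRing R] (q : R)

/-- The weights `-q ^ (a + 1)` and `-q ^ a` of an up step and of a down step from height `a`. -/
def qStepWeight (b : Bool) (a : ℤ) : R := -q ^ (a.toNat + if b then 1 else 0)

lemma pathSum_qStepWeight (h u : ℕ) :
    pathSum (qStepWeight q) (h + 2 * u) h = pathPoly q h u := by
  have up_weight (a : ℕ) : 1 + qStepWeight q true a = 1 - q ^ (a + 1) := by
    simp [qStepWeight, sub_eq_add_neg]
  have down_weight (a : ℕ) : 1 + qStepWeight q false a = 1 - q ^ a := by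
    simp [qStepWeight, sub_eq_add_neg]
  induction u generalizing h with
  | zero =>
    rw [pathPoly_zero_right, mul_zero, add_zero]
    induction h with
    | zero => simpa [qPochhammer] using pathSum_zero_zero (qStepWeight q)
    | succ h ih => rw [pathSum_succ_self, up_weight, ih, qPochhammer_succ, mul_comm]
  | succ u ih_u =>
    induction h with
    | zero =>
      have from_one := ih_u 1
      have from_zero := ih_u 0
      rw [show 1 + 2 * u = 2 * u + 1 by ring] at from_one
      rw [zero_add] at from_zero
      rw [show 0 + 2 * (u + 1) = 2 * u + 2 by ring, pathSum_add_two _ _ (Int.natCast_nonneg _),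
        pathSum_of_neg _ _ (by omega), ← Nat.cast_succ, down_weight, from_one, from_zero,
        pathPoly_zero_succ]
      ring
    | succ h ih_h =>
      have from_above := ih_u (h + 2)
      have from_level := ih_u (h + 1)
      have hprev : ((h + 1 : ℕ) : ℤ) - 1 = h := by omega
      rw [show h + 2 * (u + 1) = h + 1 + 2 * u + 1 by ring] at ih_h
      rw [show h + 2 + 2 * u = h + 1 + 2 * u + 1 by ring] at from_above
      rw [show h + 1 + 2 * (u + 1) = h + 1 + 2 * u + 2 by ring,
        pathSum_add_two _ _ (Int.natCast_nonneg _), hprev, ← Nat.cast_succ, up_weight, down_weight,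
        ih_h, from_above, from_level, pathPoly_succ_succ]

theorem stmt15_general (k : ℕ) :
    (∑ j ∈ Finset.range (2 * k + 1), (-1 : R) ^ (j + k) * q ^ (j * (2 * k - j) + k)) =
      ∑ p ∈ (Finset.univ : Finset ((Fin (2 * k) → Bool) × (Fin (2 * k) → Bool))).filter
          (fun p => IsDyck p.1 ∧ NoDouble11 p.1 p.2),
        ∏ i : Fin (2 * k),
          (if p.2 i then (1 : R)
           else -(q ^ ((pathHeight p.1 (i : ℕ)).toNat + (if p.1 i then 1 else 0)))) := by
  have closed_form := pathSum_qStepWeight q 0 k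
  rw [zero_add, pathPoly_zero_left] at closed_form
  rw [← closed_form]
  simp only [pathSum, admissiblePaths, pathWeight, qStepWeight, IsDyck, Nat.cast_zero, and_assoc]

end ClosedForm

theorem stmt15 (k : ℕ) :
    (∑ j ∈ Finset.range (2*k+1), (-1 : Polynomial ℤ)^(j+k) * X ^ (j * (2*k-j) + k)) =
      ∑ p ∈ (Finset.univ : Finset ((Fin (2*k) → Bool) × (Fin (2*k) → Bool))).filter
          (fun p => IsDyck p.1 ∧ NoDouble11 p.1 p.2),
        ∏ i : Fin (2*k),
          (if p.2 i then (1 : Polynomial ℤ)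
           else -(X ^ ((pathHeight p.1 (i : ℕ)).toNat + (if p.1 i then 1 else 0)))) :=
  stmt15_general X k
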